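/- The intertwining operator 𝒥, defined on functions f : P → ℂ by (𝒥 f)(λ) := τ_{w_λ}⁻¹ (I_{w_λ} f)(λ₊), is a linear automorphism of the space of all functions P → ℂ; in particular it is bijective. -/

import Mathlib

open scoped RealInnerProductSpace BigOperators Classical

noncomputable section

/-- Alternating composition `A ∘ B ∘ A ∘ ⋯` with `m` factors (starting with `A`). -/
def altComp {α : Type*} (A B : α → α) : ℕ → (α → α)
  | 0 => id
  | m + 1 => A ∘ altComp B A m

/-- The sign of a real number, as an integer (with `sgnZ 0 = 0`). -/
def sgnZ (x : ℝ) : ℤ := if 0 < x then 1 else if x < 0 then -1 else 0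

/-- The function `v(x) = (1-t²)∫₀ˣ dy/(1-2t cos y+t²)`. -/
def mvfun (t x : ℝ) : ℝ :=
  (1 - t ^ 2) * ∫ y in (0:ℝ)..x, 1 / (1 - 2 * t * Real.cos y + t ^ 2)

section AffineOps

variable {V : Type*} [NormedAddCommGroup V] [InnerProductSpace ℝ V]

/-- The coroot `α∨ = 2α/⟨α,α⟩`. -/
def coroot (α : V) : V := (2 / ⟪α, α⟫) • α

/-- The affine root `a = α∨ + r c` (encoded as the pair `(α, r)`), as an affine
function on `V`. -/
def aval (c : ℝ) (a : V × ℤ) (x : V) : ℝ := ⟪x, coroot a.1⟫ + a.2 * c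

/-- The affine reflection `s_a(x) = x - a(x) α` attached to `a = α∨ + r c`. -/
def sAff (c : ℝ) (a : V × ℤ) (x : V) : V := x - aval c a x • a.1

/-- `w` maps the affine root `a` to the affine root `b`, i.e. `(wa)(x) = a(w⁻¹x) = b(x)`. -/
def mapsRoot (c : ℝ) (w : Equiv.Perm V) (a b : V × ℤ) : Prop :=
  ∀ x : V, aval c a (w⁻¹ x) = aval c b x

/-- The linear part `w′` of an affine transformation `w`. -/
def linPart (w : Equiv.Perm V) (x : V) : V := w x - w 0

variable {R : Type*} [Field R]

/-- The difference-reflection operator `T̂_a`. -/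
def hatT (c : ℝ) (τ : V × ℤ → R) (a : V × ℤ) (f : V → R) (x : V) : R :=
  if 0 < aval c a x then τ a * f (sAff c a x)
  else if aval c a x = 0 then τ a * f x
  else (τ a)⁻¹ * f (sAff c a x) + (τ a - (τ a)⁻¹) * f x

/-- The discrete integral operator `J_a`. -/
def Jop (c : ℝ) (a : V × ℤ) (f : V → R) (x : V) : R :=
  if 0 < aval c a x then
    - ∑ k ∈ Finset.Icc (1 : ℤ) ⌊aval c a x⌋, f (x - k • a.1)
  else if aval c a x = 0 then 0
  else ∑ k ∈ Finset.Ico (0 : ℤ) (-⌊aval c a x⌋), f (x + k • a.1)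

/-- The integral-reflection operator `I_a = τ_a s_a + (τ_a - τ_a⁻¹) J_a`. -/
def Iop (c : ℝ) (τ : V × ℤ → R) (a : V × ℤ) (f : V → R) (x : V) : R :=
  τ a * f (sAff c a x) + (τ a - (τ a)⁻¹) * Jop c a f x

end AffineOps

/-- An irreducible reduced crystallographic root system spanning `V`, together with a
choice of positive roots, simple roots, and the highest short root. -/
structure RootSystemData (V : Type*) [NormedAddCommGroup V] [InnerProductSpace ℝ V] :
    Type _ where
  n : ℕ
  n_pos : 1 ≤ n
  rank_eq : Module.finrank ℝ V = n
  R0 : Finset V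
  ne_zero : ∀ α ∈ R0, α ≠ (0 : V)
  span_top : Submodule.span ℝ (R0 : Set V) = ⊤
  reduced : ∀ α ∈ R0, ∀ t : ℝ, t • α ∈ R0 → t = 1 ∨ t = -1
  crystallographic : ∀ α ∈ R0, ∀ β ∈ R0, ∃ k : ℤ, ⟪β, coroot α⟫ = (k : ℝ)
  reflect_mem : ∀ α ∈ R0, ∀ β ∈ R0, β - ⟪β, coroot α⟫ • α ∈ R0
  irreducible : ∀ S : Finset V, S ⊆ R0 →
      (∀ a ∈ S, ∀ b ∈ R0, b ∉ S → ⟪a, b⟫ = 0) → S = ∅ ∨ S = R0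
  pos : Finset V
  pos_subset : pos ⊆ R0
  pos_or_neg : ∀ α ∈ R0, α ∈ pos ∨ -α ∈ pos
  pos_not_both : ∀ α ∈ pos, -α ∉ pos
  pos_add : ∀ α ∈ pos, ∀ β ∈ pos, α + β ∈ R0 → α + β ∈ pos
  simpleRoot : Fin n → V
  simpleRoot_mem : ∀ j, simpleRoot j ∈ pos
  pos_natCombo : ∀ α ∈ pos, ∃ k : Fin n → ℕ, α = ∑ j, (k j : ℝ) • simpleRoot j
  hshort : V
  hshort_mem : hshort ∈ pos
  hshort_short : ∀ α ∈ R0, ‖hshort‖ ≤ ‖α‖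
  hshort_highest : ∀ α ∈ R0, ‖α‖ = ‖hshort‖ →
      ∃ k : Fin n → ℕ, hshort - α = ∑ j, (k j : ℝ) • simpleRoot j

namespace RootSystemData

variable {V : Type*} [NormedAddCommGroup V] [InnerProductSpace ℝ V]
variable (D : RootSystemData V)

/-- The weight lattice `P`. -/
def weightLattice : Set V :=
  {x : V | ∀ α ∈ D.R0, ∃ k : ℤ, ⟪x, coroot α⟫ = (k : ℝ)}

/-- The root lattice `Q`. -/
def rootLattice : Set V := (Submodule.span ℤ (D.R0 : Set V) : Set V)

/-- The coweight lattice `P∨`. -/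
def coweightLattice : Set V :=
  {x : V | ∀ α ∈ D.R0, ∃ k : ℤ, ⟪x, α⟫ = (k : ℝ)}

/-- The dominant cone. -/
def dominant : Set V := {x : V | ∀ α ∈ D.pos, 0 ≤ ⟪x, coroot α⟫}

/-- `ω` is a minuscule (dominant) weight. -/
def IsMinuscule (ω : V) : Prop :=
  ω ∈ D.weightLattice ∧ ω ∈ D.dominant ∧ ω ≠ 0 ∧
    ∀ α ∈ D.pos, ⟪ω, coroot α⟫ ≤ 1

/-- `ω` is the quasi-minuscule weight, i.e. the highest short root. -/
def IsQuasiMinuscule (ω : V) : Prop := ω = D.hshort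

/-- The saturated set `P_ϑ` containing the (quasi-)minuscule weights. -/
def Ptheta : Set V :=
  {ν : V | ν ∈ D.weightLattice ∧ ∀ α ∈ D.R0, α ≠ ν → |⟪ν, coroot α⟫| ≤ 1}

/-- Half sum of the positive roots. -/
def rhoHalf : V := (2⁻¹ : ℝ) • ∑ α ∈ D.pos, α

/-- Half sum of the positive coroots. -/
def rhoVee : V := (2⁻¹ : ℝ) • ∑ α ∈ D.pos, coroot α

/-- `(α, r)` encodes an affine root. -/
def IsAffRoot (a : V × ℤ) : Prop := a.1 ∈ D.R0

/-- `(α, r)` encodes a positive affine root. -/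
def IsAffPos (a : V × ℤ) : Prop :=
  a.1 ∈ D.R0 ∧ (1 ≤ a.2 ∨ (a.2 = 0 ∧ a.1 ∈ D.pos))

/-- `(α, r)` encodes a negative affine root. -/
def IsAffNeg (a : V × ℤ) : Prop := D.IsAffPos (-a.1, -a.2)

/-- The simple affine roots `a₀ = -ϑ∨ + c`, `a_j = α_j∨`. -/
def aSimple (j : Fin (D.n + 1)) : V × ℤ :=
  Fin.cons (α := fun _ => V × ℤ) (-D.hshort, (1 : ℤ))
    (fun i => (D.simpleRoot i, (0 : ℤ))) j

/-- The reflections generating the finite Weyl group `W₀`. -/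
def W0Gens : Set (Equiv.Perm V) :=
  {e | ∃ α ∈ D.R0, ∀ x, e x = x - ⟪x, coroot α⟫ • α}

/-- The finite Weyl group `W₀`. -/
def W0 : Subgroup (Equiv.Perm V) := Subgroup.closure D.W0Gens

variable (c : ℝ)

/-- The affine reflections generating the affine Weyl group `W_R`. -/
def AffGens : Set (Equiv.Perm V) :=
  {e | ∃ a : V × ℤ, D.IsAffRoot a ∧ ∀ x, e x = sAff c a x}

/-- The affine Weyl group `W_R`. -/
def WR : Subgroup (Equiv.Perm V) := Subgroup.closure (D.AffGens c)

/-- The translations `t_{cλ}`, `λ ∈ P`. -/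
def TransGens : Set (Equiv.Perm V) :=
  {e | ∃ lam ∈ D.weightLattice, ∀ x : V, e x = x + c • lam}

/-- The extended affine Weyl group `W = W₀ ⋉ t(cP)`. -/
def Wext : Subgroup (Equiv.Perm V) :=
  Subgroup.closure (D.AffGens c ∪ D.TransGens c)

/-- The set `R(w) = R⁺ ∩ w⁻¹(R⁻)`. -/
def RW (w : Equiv.Perm V) : Set (V × ℤ) :=
  {a | D.IsAffPos a ∧ ∃ b : V × ℤ, D.IsAffNeg b ∧ mapsRoot c w a b}

/-- The length `ℓ(w) = #R(w)`. -/
def len (w : Equiv.Perm V) : ℕ := (D.RW c w).ncard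

/-- The closed fundamental alcove `A_c`. -/
def alcove : Set V := {x | ∀ a : V × ℤ, D.IsAffPos a → 0 ≤ aval c a x}

/-- `wmin x` is the unique shortest element of the affine Weyl group mapping `x` into
the fundamental alcove. -/
def IsWmin (wmin : V → Equiv.Perm V) : Prop :=
  ∀ x : V, wmin x ∈ D.WR c ∧ (wmin x) x ∈ D.alcove c ∧
    ∀ w ∈ D.WR c, w x ∈ D.alcove c → D.len c (wmin x) < D.len c w ∨ w = wmin x

/-- One step in the Bruhat order: `w < w s_a` whenever `ℓ(w) < ℓ(w s_a)`. -/
def bruhatStep (w w' : Equiv.Perm V) : Prop :=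
  ∃ a : V × ℤ, D.IsAffPos a ∧ ∃ e : Equiv.Perm V,
    (∀ x, e x = sAff c a x) ∧ w' = w * e ∧ D.len c w < D.len c w'

/-- The Bruhat order on the affine Weyl group. -/
def bruhatLE (w w' : Equiv.Perm V) : Prop :=
  Relation.ReflTransGen (D.bruhatStep c) w w'

/-- The partial order on `V`: `x ≤ y` iff `x₊ = y₊` and `w_x ≤ w_y` (Bruhat). -/
def vle (wmin : V → Equiv.Perm V) (x y : V) : Prop :=
  (wmin x) x = (wmin y) y ∧ D.bruhatLE c (wmin x) (wmin y)

/-- The interval `[x, y]` for the order `vle`. -/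
def vInterval (wmin : V → Equiv.Perm V) (x y : V) : Set V :=
  {z : V | D.vle c wmin x z ∧ D.vle c wmin z y}

/-- The partial order `⪯` on the weight lattice:
`μ ⪯ λ` iff `λ - μ ∈ Q` and `Conv [μ₊, μ] ⊆ Conv [λ₊, λ]`. -/
def pleq (wmin : V → Equiv.Perm V) (μ lam : V) : Prop :=
  lam - μ ∈ D.rootLattice ∧
    convexHull ℝ (D.vInterval c wmin ((wmin μ) μ) μ)
      ⊆ convexHull ℝ (D.vInterval c wmin ((wmin lam) lam) lam)

section Ops

variable {R : Type*} [Field R]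

/-- `τ` is a multiplicity function: nonvanishing on affine roots, and invariant
under the (extended affine) Weyl group action on the affine roots. -/
def IsMultiplicity (τ : V × ℤ → R) : Prop :=
  (∀ a : V × ℤ, D.IsAffRoot a → τ a ≠ 0) ∧
    ∀ w ∈ D.Wext c, ∀ a b : V × ℤ, D.IsAffRoot a → D.IsAffRoot b →
      mapsRoot c w a b → τ a = τ b

/-- `τ_w = ∏_{a ∈ R(w)} τ_a`. -/
def tauw (τ : V × ℤ → R) (w : Equiv.Perm V) : R := ∏ᶠ a ∈ D.RW c w, τ a

/-- `τ₀`, the multiplicity of the affine simple root `a₀`. -/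
def tauZero (τ : V × ℤ → R) : R := τ (-D.hshort, (1 : ℤ))

/-- The operator `I_{j₁} ∘ ⋯ ∘ I_{jℓ}` attached to a word in the simple reflections. -/
def wordOp (τ : V × ℤ → R) (l : List (Fin (D.n + 1))) : (V → R) → V → R :=
  (l.map fun j => Iop c τ (D.aSimple j)).foldr (· ∘ ·) id

/-- `l` is a reduced word for `w`, i.e. `w = s_{j₁} ∘ ⋯ ∘ s_{jℓ}` with `ℓ = ℓ(w)`. -/
def IsReducedWord (w : Equiv.Perm V) (l : List (Fin (D.n + 1))) : Prop :=
  l.length = D.len c w ∧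
    ∀ x : V, w x = ((l.map fun j => sAff c (D.aSimple j)).foldr (· ∘ ·) id) x

/-- `e∨_τ(η) = ∏_{α ∈ R₀⁺} τ_{α∨}^{⟨η,α∨⟩}`. -/
def etau (τ : V × ℤ → R) (η : V) : R :=
  ∏ α ∈ D.pos, τ (α, (0 : ℤ)) ^ ⌊⟪η, coroot α⟫⌋

/-- `h∨_τ = τ₀² e∨_τ(ϑ)`. -/
def hvee (τ : V × ℤ → R) : R := D.tauZero τ ^ 2 * D.etau τ D.hshort

/-- `θ(μ) = #{b ∈ R(w_μ) : b(μ) = -2}`. -/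
def theta (wmin : V → Equiv.Perm V) (μ : V) : ℕ :=
  {b : V × ℤ | b ∈ D.RW c (wmin μ) ∧ aval c b μ = -2}.ncard

/-- The coefficient `c_{λ,η} = θ(λ-η) e∨_τ(η) (h∨_τ)^{-sign⟨λ,η∨⟩}`. -/
def ccoef (τ : V × ℤ → R) (wmin : V → Equiv.Perm V) (lam η : V) : R :=
  (D.theta c wmin (lam - η) : R) * D.etau τ η *
    D.hvee τ ^ (-sgnZ ⟪lam, coroot η⟫)

/-- The coefficient `a_{λ,ν} = τ_{w_{w_λ(λ-ν)}} τ_{w_{w_λ(λ-ν)} w_λ} τ_{w_λ}⁻¹`. -/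
def acoef (τ : V × ℤ → R) (wmin : V → Equiv.Perm V) (lam ν : V) : R :=
  D.tauw c τ (wmin ((wmin lam) (lam - ν))) *
    D.tauw c τ (wmin ((wmin lam) (lam - ν)) * wmin lam) *
    (D.tauw c τ (wmin lam))⁻¹

/-- The coefficient `b_{λ,ν}`. -/
def bcoef (τ : V × ℤ → R) (wmin : V → Equiv.Perm V) (lam ν : V) : R :=
  if (wmin (lam - ν)) (lam - ν) = (wmin lam) lam then
    D.tauw c τ (wmin ((wmin lam) (lam - ν))) ^ 2 *
      (if D.IsAffNeg (ν, ⌊(1 - ⟪lam, coroot ν⟫) / c⌋) then 1 else 0)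
  else D.ccoef c τ wmin ((wmin lam) lam) (linPart (wmin lam) ν)

/-- The intertwining operator `(𝒥f)(λ) = τ_{w_λ}⁻¹ (I_{w_λ} f)(λ₊)`, where `Iw` assigns
to each `w_λ` the composite of integral-reflection operators along a reduced word. -/
def Jcal (τ : V × ℤ → R) (wmin : V → Equiv.Perm V)
    (Iw : Equiv.Perm V → (V → R) → V → R) (f : V → R) (x : V) : R :=
  (D.tauw c τ (wmin x))⁻¹ * Iw (wmin x) f ((wmin x) x)

end Ops

/-- The Yang–Yang type Morse function `𝒱_μ`. -/
def morse (t : V → ℝ) (μ ξ : V) : ℝ :=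
  (c / 2) * ⟪ξ, ξ⟫ - 2 * Real.pi * ⟪D.rhoVee + μ, ξ⟫ +
    ∑ α ∈ D.pos, (2 / ⟪α, α⟫) * ∫ x in (0:ℝ)..(⟪ξ, α⟫), mvfun (t α) x

/-- The critical equation `cξ + ∑_{α>0} v_α(⟨ξ,α⟩) α∨ = 2π(ρ∨+μ)`. -/
def criticalEq (t : V → ℝ) (μ ξ : V) : Prop :=
  c • ξ + ∑ α ∈ D.pos, mvfun (t α) ⟪ξ, α⟫ • coroot α
    = (2 * Real.pi) • (D.rhoVee + μ)

/-- The Hessian bilinear form `H_{η,ζ}(ξ)`. -/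
def hessForm (t : V → ℝ) (ξ η ζ : V) : ℝ :=
  c * ⟪η, ζ⟫ + ∑ α ∈ D.R0,
    (1 - t α ^ 2) * ⟪η, α⟫ * ⟪ζ, α⟫ /
      (⟪α, α⟫ * (1 - 2 * t α * Real.cos ⟪ξ, α⟫ + t α ^ 2))

/-- `κ_± = (2/n) ∑_{α>0} (1-t_α²)/(1 ± |t_α|)²`; here `s = ±1`. -/
def kappaPM (t : V → ℝ) (s : ℝ) : ℝ :=
  (2 / (D.n : ℝ)) * ∑ α ∈ D.pos, (1 - t α ^ 2) / (1 + s * |t α|) ^ 2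

end RootSystemData

open RootSystemData in
/-- The intertwining operator `𝒥` as an operator on the space of functions `P → ℂ`
(a function on the weight lattice is extended by zero to apply the integral-reflection
operators, on which the restriction of `𝒥` to `P` does not depend). -/
def JcalP {V : Type*} [NormedAddCommGroup V] [InnerProductSpace ℝ V]
    (D : RootSystemData V) (c : ℝ) (τ : V × ℤ → ℂ) (wmin : V → Equiv.Perm V)
    (Iw : Equiv.Perm V → (V → ℂ) → V → ℂ)
    (f : D.weightLattice → ℂ) (lam : D.weightLattice) : ℂ :=
  D.Jcal c τ wmin Iw
    (fun x => if h : x ∈ D.weightLattice then f ⟨x, h⟩ else 0) lam.1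

/-!
The operator `𝒥` is triangular with nonzero diagonal for a well-founded relation on `P`: comparing
distances to a fixed point `p` in the interior of the fundamental alcove. Let `λ ∈ P`. A reduced
word for `w_λ` moves `λ` to `λ₊` through a chain of reflections towards the alcove, and the
operators `I_j` are applied along this chain. The value of `I_j f` at `z` only depends on `f` on
the segment from `z` to `s_j z`. Hence `(I_{w_λ} f)(λ₊)` only involves `f` on the convex hull of
the points below `λ`, in the order generated by `y ≤ s_b y` for positive affine roots `b` with
`b(y) > 0`. The points below `λ` other than `λ` are strictly closer to `p` than `λ`, hence so are
all other points of the hull, while `λ` is only reached as the last endpoint of successive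
segments, so that the coefficient of `f(λ)` is a product of nonzero factors.
-/

section WellFounded

variable {X M : Type*} [AddGroup M] {r : X → X → Prop}

theorem injective_of_triangular (hr : WellFounded r) (T : (X → M) →+ (X → M))
    (d : X → M → M) (hd : ∀ x, (d x).Injective)
    (hT : ∀ f x, (∀ y, r y x → f y = 0) → T f x = d x (f x)) :
    Function.Injective T := by
  refine (injective_iff_map_eq_zero T).2 fun f hf ↦ funext fun x ↦ ?_
  induction x using hr.induction with
  | _ x ih =>
    have diag_zero : d x 0 = 0 := by simpa using (hT 0 x fun _ _ ↦ rfl).symm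
    refine hd x ?_
    rw [← hT f x ih, hf]
    exact diag_zero.symm

theorem surjective_of_triangular (hr : WellFounded r) (T : (X → M) →+ (X → M))
    (d : X → M → M) (hd : ∀ x, (d x).Surjective)
    (hT : ∀ f x, (∀ y, r y x → f y = 0) → T f x = d x (f x)) :
    Function.Surjective T := fun g ↦ by
  let below (f : X → M) (x : X) : X → M := fun y ↦ if r y x then f y else 0
  let f : X → M := hr.fix fun x f ↦
    Function.surjInv (hd x) (g x - T (fun y ↦ if h : r y x then f y h else 0) x)
  refine ⟨f, funext fun x ↦ ?_⟩
  have diag_f : d x (f x) = g x - T (below f x) x := by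
    simp only [f, below]
    rw [hr.fix_eq, Function.surjInv_eq (hd x)]
    simp only [dite_eq_ite]
  have irrefl : ¬ r x x := fun h ↦ hr.irrefl.irrefl x h
  have split : T (f - below f x) x = d x (f x) := by
    rw [hT _ x fun y hy ↦ by simp [below, hy]]
    simp [below, irrefl]
  rwa [map_sub, Pi.sub_apply, diag_f, sub_left_inj] at split

theorem wellFounded_dist_lt {Y : Type*} [PseudoMetricSpace Y] {s : Set Y} (p : Y)
    (hs : ∀ ρ, (s ∩ Metric.ball p ρ).Finite) :
    WellFounded fun x y : s ↦ dist (x : Y) p < dist (y : Y) p := by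
  let closer (x : s) : Set Y := s ∩ Metric.ball p (dist (x : Y) p)
  refine Subrelation.wf ?_ (measure fun x ↦ (closer x).ncard).wf
  intro x y hxy
  refine Set.ncard_lt_ncard ⟨fun z hz ↦ ⟨hz.1, hz.2.trans hxy⟩, fun h ↦ ?_⟩ (hs _)
  exact lt_irrefl _ (Metric.mem_ball.1 (h ⟨x.2, hxy⟩).2)

end WellFounded

section Convex

theorem convex_insert_of_isOpen {E : Type*} [AddCommGroup E] [Module ℝ E] [TopologicalSpace E]
    [IsTopologicalAddGroup E] [ContinuousSMul ℝ E] {s : Set E} {y : E}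
    (hs : Convex ℝ s) (ho : IsOpen s) (hy : y ∈ closure s) : Convex ℝ (insert y s) := by
  have toward_y : ∀ u ∈ s, openSegment ℝ u y ⊆ s := fun u hu ↦ by
    simpa only [ho.interior_eq] using
      hs.openSegment_interior_closure_subset_interior (ho.interior_eq.symm ▸ hu) hy
  refine convex_iff_openSegment_subset.2 ?_
  rintro u (rfl | hu) v (rfl | hv)
  · simp
  · exact (openSegment_symm ℝ u v ▸ toward_y v hv).trans (Set.subset_insert _ _)
  · exact (toward_y u hu).trans (Set.subset_insert _ _)
  · exact (hs.openSegment_subset hu hv).trans (Set.subset_insert _ _)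

theorem convex_insert_ball_dist {E : Type*} [SeminormedAddCommGroup E] [NormedSpace ℝ E]
    (p y : E) : Convex ℝ (insert y (Metric.ball p (dist y p))) := by
  rcases eq_or_ne (dist y p) 0 with h | h
  · rw [h, Metric.ball_zero]
    simp only [insert_empty_eq, convex_singleton]
  · refine convex_insert_of_isOpen (convex_ball p _) Metric.isOpen_ball ?_
    rw [closure_ball p h]
    exact Metric.mem_closedBall.2 le_rfl

end Convex

section Inner

variable {V : Type*} [NormedAddCommGroup V] [InnerProductSpace ℝ V]

theorem exists_inner_basis_eq {ι : Type*} [Finite ι] (b : Module.Basis ι ℝ V) (t : ι → ℝ) :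
    ∃ q : V, ∀ i, ⟪q, b i⟫ = t i := by
  have : FiniteDimensional ℝ V := b.finiteDimensional_of_finite
  refine ⟨(InnerProductSpace.toDual ℝ V).symm (b.constr ℝ t).toContinuousLinearMap, fun i ↦ ?_⟩
  simp only [InnerProductSpace.toDual_symm_apply, LinearMap.coe_toContinuousLinearMap',
    Module.Basis.constr_basis]

end Inner

section AffineReflections

variable {V : Type*} [NormedAddCommGroup V] [InnerProductSpace ℝ V] {c : ℝ} {a b : V × ℤ} {α : V}

theorem inner_coroot (x α : V) : ⟪x, coroot α⟫ = 2 / ⟪α, α⟫ * ⟪x, α⟫ :=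
  real_inner_smul_right ..

theorem coroot_neg (α : V) : coroot (-α) = -coroot α := by
  simp only [coroot, inner_neg_neg, smul_neg]

theorem inner_self_coroot (hα : α ≠ 0) : ⟪α, coroot α⟫ = 2 := by
  rw [inner_coroot, div_mul_cancel₀ _ (inner_self_ne_zero.2 hα)]

theorem coroot_coroot (hα : α ≠ 0) : coroot (coroot α) = α := by
  have hαα : ⟪α, α⟫ ≠ 0 := inner_self_ne_zero.2 hα
  have scale : 2 / ⟪coroot α, coroot α⟫ * (2 / ⟪α, α⟫) = 1 := by
    rw [inner_coroot, real_inner_comm α (coroot α), inner_self_coroot hα]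
    field_simp
  calc coroot (coroot α) = (2 / ⟪coroot α, coroot α⟫ * (2 / ⟪α, α⟫)) • α := by
        rw [mul_smul]; rfl
    _ = α := by rw [scale, one_smul]

theorem coroot_injOn : Set.InjOn (coroot (V := V)) {0}ᶜ := fun α hα β hβ h ↦ by
  rw [← coroot_coroot hα, h, coroot_coroot hβ]

theorem norm_sub_inner_coroot_smul (hα : α ≠ 0) (β : V) :
    ‖β - ⟪β, coroot α⟫ • α‖ = ‖β‖ := by
  have hαα : ⟪α, α⟫ ≠ 0 := inner_self_ne_zero.2 hα
  rw [← sq_eq_sq₀ (norm_nonneg _) (norm_nonneg _), norm_sub_sq_real, norm_smul, mul_pow,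
    Real.norm_eq_abs, sq_abs, real_inner_smul_right, inner_coroot, ← real_inner_self_eq_norm_sq α]
  field_simp
  ring

theorem coroot_sub_inner_coroot_smul (hα : α ≠ 0) (β : V) :
    coroot (β - ⟪β, coroot α⟫ • α) = coroot β - ⟪α, coroot β⟫ • coroot α := by
  rw [coroot, real_inner_self_eq_norm_sq, norm_sub_inner_coroot_smul hα,
    ← real_inner_self_eq_norm_sq, smul_sub]
  rw [inner_coroot, inner_coroot, real_inner_comm α β, coroot, coroot, smul_smul, smul_smul]
  ring_nf

theorem aval_neg (c : ℝ) (a : V × ℤ) (x : V) : aval c (-a.1, -a.2) x = -aval c a x := by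
  simp only [aval, coroot_neg, inner_neg_right, Int.cast_neg]
  ring

theorem aval_sub_smul (c : ℝ) (a : V × ℤ) (x y : V) (t : ℝ) :
    aval c a (x - t • y) = aval c a x - t * ⟪y, coroot a.1⟫ := by
  simp only [aval, inner_sub_left, real_inner_smul_left]
  ring

theorem aval_sAff (ha : a.1 ≠ 0) (x : V) : aval c a (sAff c a x) = -aval c a x := by
  rw [sAff, aval_sub_smul, inner_self_coroot ha]
  ring

theorem sAff_involutive (ha : a.1 ≠ 0) : Function.Involutive (sAff c a) := fun x ↦ by
  rw [sAff, aval_sAff ha, sAff, neg_smul, sub_neg_eq_add, sub_add_cancel]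

theorem eq_of_aval_eq (hc : c ≠ 0) (ha : a.1 ≠ 0) (hb : b.1 ≠ 0)
    (h : ∀ x, aval c a x = aval c b x) : a = b := by
  have level : a.2 = b.2 := by simpa [aval, hc] using h 0
  have direction : coroot a.1 = coroot b.1 :=
    ext_inner_left ℝ fun x ↦ by simpa [aval, level] using h x
  exact Prod.ext (coroot_injOn ha hb direction) level

theorem aval_smul_add_smul (c : ℝ) (a : V × ℤ) (x y : V) {s t : ℝ} (hst : s + t = 1) :
    aval c a (s • x + t • y) = s * aval c a x + t * aval c a y := by
  simp only [aval, inner_add_left, real_inner_smul_left]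
  linear_combination -(a.2 * c) * hst

theorem convex_preimage_sAff (c : ℝ) (a : V × ℤ) {S : Set V} (hS : Convex ℝ S) :
    Convex ℝ (sAff c a ⁻¹' S) := fun x hx y hy s t hs ht hst ↦ by
  have affine : sAff c a (s • x + t • y) = s • sAff c a x + t • sAff c a y := by
    simp only [sAff, aval_smul_add_smul c a x y hst, smul_sub, smul_smul, add_smul]
    abel
  rw [Set.mem_preimage, affine]
  exact hS hx hy hs ht hst

theorem norm_sAff_sub_sq (ha : a.1 ≠ 0) (x p : V) :
    ‖sAff c a x - p‖ ^ 2 = ‖x - p‖ ^ 2 + ⟪a.1, a.1⟫ * aval c a x * aval c a p := by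
  have haa : ⟪a.1, a.1⟫ ≠ 0 := inner_self_ne_zero.2 ha
  have diff : aval c a x - aval c a p = 2 / ⟪a.1, a.1⟫ * ⟪x - p, a.1⟫ := by
    rw [← inner_coroot, inner_sub_left, aval, aval]
    ring
  have inner_diff : ⟪x - p, a.1⟫ = ⟪a.1, a.1⟫ * (aval c a x - aval c a p) / 2 := by
    rw [diff]
    field_simp
  rw [sAff, sub_right_comm, norm_sub_sq_real, real_inner_smul_right, inner_diff, norm_smul,
    mul_pow, Real.norm_eq_abs, sq_abs, ← real_inner_self_eq_norm_sq a.1]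
  ring

theorem dist_lt_dist_sAff (ha : a.1 ≠ 0) {x p : V} (hx : 0 < aval c a x) (hp : 0 < aval c a p) :
    dist x p < dist (sAff c a x) p := by
  rw [dist_eq_norm, dist_eq_norm, ← sq_lt_sq₀ (norm_nonneg _) (norm_nonneg _),
    norm_sAff_sub_sq ha]
  have := real_inner_self_pos.2 ha
  exact lt_add_of_pos_right _ (by positivity)

theorem sub_smul_mem_segment (c : ℝ) (a : V × ℤ) (x : V) {t : ℝ}
    (ht : t ∈ Set.uIcc 0 (aval c a x)) : x - t • a.1 ∈ segment ℝ x (sAff c a x) := by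
  rw [← segment_eq_uIcc, segment_eq_image'] at ht
  obtain ⟨θ, hθ, rfl⟩ := ht
  rw [segment_eq_image']
  refine ⟨θ, hθ, ?_⟩
  simp only [sAff, sub_sub_cancel_left, sub_zero, zero_add, smul_eq_mul, mul_smul, smul_neg,
    ← sub_eq_add_neg]

end AffineReflections

section IntegralReflections

variable {V : Type*} [NormedAddCommGroup V] [InnerProductSpace ℝ V] {R : Type*} [Field R]
  {c : ℝ} {τ : V × ℤ → R} {a : V × ℤ} {f : V → R} {x : V}

theorem sub_zsmul_eq_sAff_iff (ha : a.1 ≠ 0) (k : ℤ) :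
    x - k • a.1 = sAff c a x ↔ (k : ℝ) = aval c a x := by
  rw [sAff, sub_right_inj, ← Int.cast_smul_eq_zsmul ℝ, (smul_left_injective ℝ ha).eq_iff]

theorem Jop_eq_zero (h : ∀ z ∈ segment ℝ x (sAff c a x), f z = 0) : Jop c a f x = 0 := by
  have vanish : ∀ k : ℤ, (k : ℝ) ∈ Set.uIcc 0 (aval c a x) → f (x - k • a.1) = 0 := fun k hk ↦ by
    rw [← Int.cast_smul_eq_zsmul ℝ]
    exact h _ (sub_smul_mem_segment c a x hk)
  unfold Jop
  split_ifs with hpos hzero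
  · refine neg_eq_zero.2 (Finset.sum_eq_zero fun k hk ↦ vanish k ?_)
    obtain ⟨hk1, hk⟩ := Finset.mem_Icc.1 hk
    rw [Set.uIcc_of_le hpos.le]
    exact ⟨by exact_mod_cast zero_le_one.trans hk1, Int.le_floor.1 hk⟩
  · rfl
  · refine Finset.sum_eq_zero fun k hk ↦ ?_
    obtain ⟨hk0, hk⟩ := Finset.mem_Ico.1 hk
    rw [← sub_neg_eq_add, ← neg_smul]
    refine vanish (-k) ?_
    rw [Set.uIcc_of_ge (not_lt.1 hpos)]
    exact ⟨(Int.floor_lt.1 (lt_neg_of_lt_neg hk)).le, by exact_mod_cast neg_nonpos.2 hk0⟩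

theorem Iop_eq_zero (h : ∀ z ∈ segment ℝ x (sAff c a x), f z = 0) : Iop c τ a f x = 0 := by
  rw [Iop, h _ (right_mem_segment ..), Jop_eq_zero h, mul_zero, mul_zero, add_zero]

theorem isLinearMap_Jop (c : ℝ) (a : V × ℤ) : IsLinearMap R (Jop (R := R) c a) where
  map_add f g := funext fun x ↦ by
    simp only [Jop, Pi.add_apply, Finset.sum_add_distrib]
    split_ifs <;> ring
  map_smul r f := funext fun x ↦ by
    simp only [Jop, Pi.smul_apply, ← Finset.smul_sum]
    split_ifs <;> simp only [smul_neg, smul_zero]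

theorem isLinearMap_Iop (c : ℝ) (τ : V × ℤ → R) (a : V × ℤ) : IsLinearMap R (Iop c τ a) where
  map_add f g := funext fun x ↦ by
    simp only [Iop, (isLinearMap_Jop c a).map_add, Pi.add_apply]
    ring
  map_smul r f := funext fun x ↦ by
    simp only [Iop, (isLinearMap_Jop c a).map_smul, Pi.smul_apply, smul_eq_mul]
    ring

theorem Jop_single_sAff (ha : a.1 ≠ 0) (x : V) :
    Jop c a (Pi.single (sAff c a x) (1 : R)) x = 0 ∨
      Jop c a (Pi.single (sAff c a x) (1 : R)) x = -1 := by
  unfold Jop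
  split_ifs with hpos hzero
  · simp only [Pi.single_apply, sub_zsmul_eq_sAff_iff ha]
    by_cases hint : ∃ m : ℤ, (m : ℝ) = aval c a x
    · obtain ⟨m, hm⟩ := hint
      have hm1 : 0 < m := by exact_mod_cast hm ▸ hpos
      simp only [← hm, Int.cast_inj, Int.floor_intCast]
      rw [Finset.sum_ite_eq', if_pos (Finset.mem_Icc.2 ⟨hm1, le_rfl⟩)]
      exact .inr rfl
    · refine .inl (neg_eq_zero.2 (Finset.sum_eq_zero fun k _ ↦ if_neg fun hk ↦ hint ⟨k, hk⟩))
  · exact .inl rfl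
  · refine .inl (Finset.sum_eq_zero fun k hk ↦ ?_)
    rw [← sub_neg_eq_add, ← neg_smul, Pi.single_apply, sub_zsmul_eq_sAff_iff ha]
    exact if_neg (Int.floor_lt.1 (lt_neg_of_lt_neg (Finset.mem_Ico.1 hk).2)).ne'

theorem Iop_single_sAff_ne_zero (ha : a.1 ≠ 0) (hτ : τ a ≠ 0) (x : V) :
    Iop c τ a (Pi.single (sAff c a x) 1) x ≠ 0 := by
  rw [Iop, Pi.single_eq_same]
  rcases Jop_single_sAff (R := R) (c := c) ha x with h | h <;> simpa [h] using hτ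

theorem Iop_eq_mul (h : ∀ z ∈ segment ℝ x (sAff c a x), z ≠ sAff c a x → f z = 0) :
    Iop c τ a f x = Iop c τ a (Pi.single (sAff c a x) 1) x * f (sAff c a x) := by
  set y := sAff c a x
  set δ : V → R := Pi.single y 1 with hδ
  have split : f = (f - f y • δ) + f y • δ := (sub_add_cancel ..).symm
  have vanish : ∀ z ∈ segment ℝ x y, (f - f y • δ) z = 0 := fun z hz ↦ by
    rcases eq_or_ne z y with rfl | hzy
    · simp [hδ]
    · simp [hδ, h z hz hzy, hzy]
  conv_lhs => rw [split]
  rw [(isLinearMap_Iop c τ a).map_add, (isLinearMap_Iop c τ a).map_smul, Pi.add_apply,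
    Iop_eq_zero vanish, Pi.smul_apply, smul_eq_mul, zero_add, mul_comm]

end IntegralReflections

/-- The affine root `s_a b`, obtained from `b` by the affine reflection in `a`. The floor only
converts the integer `⟪α, β∨⟫` from `ℝ` to `ℤ`. -/
def reflectRoot {V : Type*} [NormedAddCommGroup V] [InnerProductSpace ℝ V] (a b : V × ℤ) : V × ℤ :=
  (b.1 - ⟪b.1, coroot a.1⟫ • a.1, b.2 - ⌊⟪a.1, coroot b.1⟫⌋ * a.2)

namespace RootSystemData

variable {V : Type*} [NormedAddCommGroup V] [InnerProductSpace ℝ V] (D : RootSystemData V)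

section Roots

variable {α : V}

theorem neg_mem_R0 (hα : α ∈ D.R0) : -α ∈ D.R0 := by
  have h := D.reflect_mem α hα α hα
  rwa [inner_self_coroot (D.ne_zero α hα), two_smul, sub_add_cancel_left] at h

theorem ne_zero_of_mem_pos (hα : α ∈ D.pos) : α ≠ 0 := D.ne_zero α (D.pos_subset hα)

theorem mem_span_simpleRoot_of_mem_pos (hα : α ∈ D.pos) :
    α ∈ Submodule.span ℝ (Set.range D.simpleRoot) := by
  obtain ⟨k, rfl⟩ := D.pos_natCombo α hα
  exact Submodule.sum_mem _ fun j _ ↦ Submodule.smul_mem _ _ (Submodule.subset_span ⟨j, rfl⟩)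

theorem span_range_simpleRoot : Submodule.span ℝ (Set.range D.simpleRoot) = ⊤ := by
  rw [eq_top_iff, ← D.span_top, Submodule.span_le]
  intro α hα
  rcases D.pos_or_neg α hα with h | h
  · exact D.mem_span_simpleRoot_of_mem_pos h
  · exact neg_mem_iff.1 (D.mem_span_simpleRoot_of_mem_pos h)

theorem exists_inner_simpleRoot_eq (t : Fin D.n → ℝ) : ∃ q, ∀ j, ⟪q, D.simpleRoot j⟫ = t j := by
  let b := basisOfTopLeSpanOfCardEqFinrank D.simpleRoot D.span_range_simpleRoot.ge
    (by rw [Fintype.card_fin, D.rank_eq])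
  simpa [b] using exists_inner_basis_eq b t

theorem exists_inner_pos : ∃ q, ∀ α ∈ D.pos, 0 < ⟪q, α⟫ := by
  obtain ⟨q, hq⟩ := D.exists_inner_simpleRoot_eq fun _ ↦ 1
  refine ⟨q, fun α hα ↦ ?_⟩
  obtain ⟨k, hk⟩ := D.pos_natCombo α hα
  have height : ⟪q, α⟫ = ((∑ j, k j : ℕ) : ℝ) := by
    simp only [hk, inner_sum, real_inner_smul_right, hq, mul_one, Nat.cast_sum]
  rw [height, Nat.cast_pos, Nat.pos_iff_ne_zero]
  refine fun hzero ↦ D.ne_zero_of_mem_pos hα ?_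
  rw [hk]
  refine Finset.sum_eq_zero fun j hj ↦ ?_
  rw [Finset.sum_eq_zero_iff.1 hzero j hj, Nat.cast_zero, zero_smul]

theorem inner_nonneg_of_mem_pos {q : V} (hq : ∀ j, 0 ≤ ⟪q, D.simpleRoot j⟫) (hα : α ∈ D.pos) :
    0 ≤ ⟪q, α⟫ := by
  obtain ⟨k, rfl⟩ := D.pos_natCombo α hα
  simp only [inner_sum, real_inner_smul_right]
  exact Finset.sum_nonneg fun j _ ↦ mul_nonneg (Nat.cast_nonneg _) (hq j)

theorem eq_simpleRoot_of_inner_nonpos {q : V} {j : Fin D.n} (hq : ∀ i ≠ j, 0 < ⟪q, D.simpleRoot i⟫)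
    (hj : ⟪q, D.simpleRoot j⟫ = 0) (hα : α ∈ D.pos) (hqα : ⟪q, α⟫ ≤ 0) :
    α = D.simpleRoot j := by
  obtain ⟨k, hk⟩ := D.pos_natCombo α hα
  have term_nonneg : ∀ i ∈ Finset.univ, 0 ≤ (k i : ℝ) * ⟪q, D.simpleRoot i⟫ := fun i _ ↦ by
    rcases eq_or_ne i j with rfl | hi
    · rw [hj, mul_zero]
    · exact mul_nonneg (Nat.cast_nonneg _) (hq i hi).le
  have sum_nonpos : ∑ i, (k i : ℝ) * ⟪q, D.simpleRoot i⟫ ≤ 0 := by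
    rw [hk] at hqα
    simpa only [inner_sum, real_inner_smul_right] using hqα
  have coeff_zero : ∀ i ≠ j, (k i : ℝ) = 0 := fun i hi ↦
    (mul_eq_zero.1 ((Finset.sum_eq_zero_iff_of_nonneg term_nonneg).1
      (sum_nonpos.antisymm (Finset.sum_nonneg term_nonneg)) i (Finset.mem_univ i))).resolve_right
        (hq i hi).ne'
  have multiple : α = (k j : ℝ) • D.simpleRoot j := by
    rw [hk]
    exact Finset.sum_eq_single j (fun i _ hi ↦ by rw [coeff_zero i hi, zero_smul]) (by simp)
  rcases D.reduced _ (D.pos_subset (D.simpleRoot_mem j)) (k j) (multiple ▸ D.pos_subset hα)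
    with h | h
  · rw [multiple, h, one_smul]
  · linarith [Nat.cast_nonneg (α := ℝ) (k j)]

theorem reflect_simpleRoot_mem_pos (j : Fin D.n) (hα : α ∈ D.pos) (hne : α ≠ D.simpleRoot j) :
    α - ⟪α, coroot (D.simpleRoot j)⟫ • D.simpleRoot j ∈ D.pos := by
  have hj := D.pos_subset (D.simpleRoot_mem j)
  refine (D.pos_or_neg _ (D.reflect_mem _ hj _ (D.pos_subset hα))).resolve_right fun hneg ↦ hne ?_
  obtain ⟨q, hq⟩ := D.exists_inner_simpleRoot_eq fun i ↦ if i = j then 0 else 1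
  have hqj : ⟪q, D.simpleRoot j⟫ = 0 := by rw [hq, if_pos rfl]
  have hqi : ∀ i ≠ j, 0 < ⟪q, D.simpleRoot i⟫ := fun i hi ↦ by rw [hq, if_neg hi]; exact one_pos
  have reflected := D.inner_nonneg_of_mem_pos (q := q)
    (fun i ↦ by rcases eq_or_ne i j with rfl | hi; exacts [hqj.ge, (hqi i hi).le]) hneg
  rw [inner_neg_right, inner_sub_right, real_inner_smul_right, hqj, mul_zero, sub_zero] at reflected
  exact D.eq_simpleRoot_of_inner_nonpos hqi hqj hα (neg_nonneg.1 reflected)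

theorem inner_hshort_coroot_nonneg (hα : α ∈ D.pos) : 0 ≤ ⟪D.hshort, coroot α⟫ := by
  obtain ⟨q, hq⟩ := D.exists_inner_pos
  obtain ⟨k, hk⟩ := D.hshort_highest _
    (D.reflect_mem _ (D.pos_subset hα) _ (D.pos_subset D.hshort_mem))
    (norm_sub_inner_coroot_smul (D.ne_zero_of_mem_pos hα) _)
  rw [sub_sub_cancel] at hk
  have height_nonneg : 0 ≤ ⟪D.hshort, coroot α⟫ * ⟪q, α⟫ := by
    rw [← real_inner_smul_right, hk, inner_sum]
    refine Finset.sum_nonneg fun j _ ↦ ?_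
    rw [real_inner_smul_right]
    exact mul_nonneg (Nat.cast_nonneg _) (hq _ (D.simpleRoot_mem j)).le
  exact nonneg_of_mul_nonneg_left height_nonneg (hq α hα)

theorem neg_one_le_inner_hshort_coroot (hα : α ∈ D.R0) (hne : α ≠ -D.hshort) :
    -1 ≤ ⟪D.hshort, coroot α⟫ := by
  obtain ⟨k, hk⟩ := D.crystallographic α hα _ (D.pos_subset D.hshort_mem)
  by_contra! hlt
  have hk2 : (k : ℝ) ≤ -2 := by
    rw [hk] at hlt
    exact_mod_cast Int.le_sub_one_of_lt (by exact_mod_cast hlt : k < -1)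
  have hαα : 0 < ⟪α, α⟫ := real_inner_self_pos.2 (D.ne_zero α hα)
  have short : ⟪D.hshort, D.hshort⟫ ≤ ⟪α, α⟫ := by
    rw [real_inner_self_eq_norm_sq, real_inner_self_eq_norm_sq]
    gcongr
    exact D.hshort_short α hα
  have inner_le : ⟪α, D.hshort⟫ ≤ -⟪α, α⟫ := by
    rw [inner_coroot, real_inner_comm α D.hshort, div_mul_eq_mul_div, div_eq_iff hαα.ne'] at hk
    nlinarith
  refine hne (eq_neg_of_add_eq_zero_left (real_inner_self_nonpos.1 ?_))
  rw [real_inner_add_add_self]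
  linarith

theorem reflect_hshort_mem_pos (hα : α ∈ D.R0) (h : ⟪D.hshort, coroot α⟫ < 0) :
    α - ⟪α, coroot D.hshort⟫ • D.hshort ∈ D.pos := by
  have hϑ := D.pos_subset D.hshort_mem
  have hϑ0 := D.ne_zero _ hϑ
  refine (D.pos_or_neg _ (D.reflect_mem _ hϑ _ hα)).resolve_right fun hneg ↦ ?_
  have := D.inner_hshort_coroot_nonneg hneg
  rw [coroot_neg, coroot_sub_inner_coroot_smul hϑ0, inner_neg_right, inner_sub_right,
    real_inner_smul_right, inner_self_coroot hϑ0] at this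
  linarith

end Roots

section AffineRoots

variable {a b : V × ℤ}

theorem isAffPos_or_isAffNeg (ha : D.IsAffRoot a) : D.IsAffPos a ∨ D.IsAffNeg a := by
  have sign := D.pos_or_neg _ ha
  simp only [IsAffPos, IsAffNeg, D.neg_mem_R0 ha, show a.1 ∈ D.R0 from ha, true_and]
  rcases lt_trichotomy a.2 0 with h | h | h
  · exact .inr (.inl (by omega))
  · simpa [h] using sign
  · exact .inl (.inl (by omega))

theorem not_isAffNeg_of_isAffPos (ha : D.IsAffPos a) : ¬ D.IsAffNeg a := by
  rintro ⟨-, h | ⟨h, hneg⟩⟩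
  · rcases ha.2 with h' | ⟨h', -⟩ <;> dsimp only at h <;> omega
  · rcases ha.2 with h' | ⟨-, hpos⟩
    · dsimp only at h; omega
    · exact D.pos_not_both _ hpos hneg

theorem isAffPos_aSimple (j : Fin (D.n + 1)) : D.IsAffPos (D.aSimple j) := by
  refine Fin.cases ?_ (fun i ↦ ?_) j
  · exact ⟨D.neg_mem_R0 (D.pos_subset D.hshort_mem), .inl le_rfl⟩
  · exact ⟨D.pos_subset (D.simpleRoot_mem i), .inr ⟨rfl, D.simpleRoot_mem i⟩⟩

theorem aSimple_fst_ne_zero (j : Fin (D.n + 1)) : (D.aSimple j).1 ≠ 0 :=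
  D.ne_zero _ (D.isAffPos_aSimple j).1

theorem isAffRoot_reflectRoot (ha : D.IsAffRoot a) (hb : D.IsAffRoot b) :
    D.IsAffRoot (reflectRoot a b) := D.reflect_mem _ ha _ hb

theorem aval_reflectRoot (c : ℝ) (ha : D.IsAffRoot a) (hb : D.IsAffRoot b) (x : V) :
    aval c (reflectRoot a b) x = aval c b (sAff c a x) := by
  obtain ⟨k, hk⟩ := D.crystallographic _ hb _ ha
  rw [sAff, aval_sub_smul]
  simp only [aval, reflectRoot]
  rw [coroot_sub_inner_coroot_smul (D.ne_zero _ ha), inner_sub_right, real_inner_smul_right, hk,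
    Int.floor_intCast]
  push_cast
  ring

theorem sAff_reflectRoot (c : ℝ) (ha : D.IsAffRoot a) (hb : D.IsAffRoot b) (x : V) :
    sAff c (reflectRoot a b) (sAff c a x) = sAff c a (sAff c b x) := by
  rw [sAff.eq_1 c (reflectRoot a b), D.aval_reflectRoot c ha hb,
    sAff_involutive (D.ne_zero _ ha)]
  simp only [sAff, reflectRoot, aval_sub_smul, smul_sub, sub_smul, smul_smul]
  abel

theorem isAffPos_reflectRoot_aSimple_zero (hb : D.IsAffPos b) (hne : b ≠ D.aSimple 0) :
    D.IsAffPos (reflectRoot (D.aSimple 0) b) := by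
  obtain ⟨α, r⟩ := b
  obtain ⟨hα, hr⟩ := hb
  dsimp only at hα hr
  obtain ⟨m, hm⟩ := D.crystallographic α hα _ (D.pos_subset D.hshort_mem)
  have reflected : reflectRoot (D.aSimple 0) (α, r) =
      (α - ⟪α, coroot D.hshort⟫ • D.hshort, r + m) := by
    simp only [reflectRoot, aSimple, Fin.cons_zero, coroot_neg, inner_neg_left, inner_neg_right,
      neg_smul_neg, hm, mul_one]
    rw [← Int.cast_neg, Int.floor_intCast, sub_neg_eq_add]
  refine ⟨D.isAffRoot_reflectRoot (D.isAffPos_aSimple 0).1 hα, ?_⟩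
  rw [reflected]
  rcases lt_trichotomy m 0 with hneg | rfl | hpos
  · have inner_neg : ⟪D.hshort, coroot α⟫ < 0 := by rw [hm]; exact_mod_cast hneg
    have hr1 : 1 ≤ r := hr.resolve_right fun h ↦
      (D.inner_hshort_coroot_nonneg h.2).not_gt inner_neg
    have level_nonneg : 0 ≤ r + m := by
      by_cases hα' : α = -D.hshort
      · have hm2 : m = -2 := by
          rw [hα', coroot_neg, inner_neg_right,
            inner_self_coroot (D.ne_zero_of_mem_pos D.hshort_mem)] at hm
          exact_mod_cast hm.symm
        have : r ≠ 1 := fun h ↦ hne (by rw [hα', h]; rfl)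
        omega
      · have := D.neg_one_le_inner_hshort_coroot hα hα'
        rw [hm] at this
        have : -1 ≤ m := by exact_mod_cast this
        omega
    rcases level_nonneg.eq_or_lt with h | h
    · exact .inr ⟨h.symm, D.reflect_hshort_mem_pos hα inner_neg⟩
    · exact .inl h
  · have orthogonal : ⟪α, coroot D.hshort⟫ = 0 := by
      have hαα : ⟪α, α⟫ ≠ 0 := inner_self_ne_zero.2 (D.ne_zero α hα)
      rw [Int.cast_zero, inner_coroot, mul_eq_zero, div_eq_zero_iff,
        or_iff_right (by simpa using hαα)] at hm
      rw [inner_coroot, inner_eq_zero_symm.1 hm, mul_zero]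
    simpa [orthogonal] using hr
  · left
    rcases hr with h | h <;> dsimp only <;> omega

theorem isAffPos_reflectRoot_aSimple (j : Fin (D.n + 1)) (hb : D.IsAffPos b)
    (hne : b ≠ D.aSimple j) : D.IsAffPos (reflectRoot (D.aSimple j) b) := by
  refine ⟨D.isAffRoot_reflectRoot (D.isAffPos_aSimple j).1 hb.1, ?_⟩
  revert hne
  refine Fin.cases (fun hne ↦ ?_) (fun i hne ↦ ?_) j
  · exact (D.isAffPos_reflectRoot_aSimple_zero hb hne).2
  · have level : (reflectRoot (D.aSimple i.succ) b).2 = b.2 := by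
      simp [reflectRoot, aSimple]
    rw [level]
    refine hb.2.imp_right fun h ↦ ⟨h.1, D.reflect_simpleRoot_mem_pos i h.2 ?_⟩
    exact fun hi ↦ hne (Prod.ext hi h.1)

end AffineRoots

end RootSystemData

namespace RootSystemData

variable {V : Type*} [NormedAddCommGroup V] [InnerProductSpace ℝ V] (D : RootSystemData V)
  (c : ℝ) {a b : V × ℤ} {j : Fin (D.n + 1)} {l : List (Fin (D.n + 1))} {w : Equiv.Perm V} {x : V}

section Words

/-- The simple affine reflection `s_j`, as a permutation of `V`. -/
def simpleReflection (j : Fin (D.n + 1)) : Equiv.Perm V :=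
  (sAff_involutive (c := c) (D.aSimple_fst_ne_zero j)).toPerm

/-- The product `s_{j₁} ⋯ s_{jℓ}` of a word in the simple reflections. -/
def wordPerm (l : List (Fin (D.n + 1))) : Equiv.Perm V :=
  (l.map (D.simpleReflection c)).prod

theorem simpleReflection_apply (j : Fin (D.n + 1)) (x : V) :
    D.simpleReflection c j x = sAff c (D.aSimple j) x := rfl

theorem simpleReflection_inv (j : Fin (D.n + 1)) :
    (D.simpleReflection c j)⁻¹ = D.simpleReflection c j := rfl

theorem wordPerm_nil : D.wordPerm c [] = 1 := rfl

theorem wordPerm_cons (j : Fin (D.n + 1)) (l : List (Fin (D.n + 1))) :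
    D.wordPerm c (j :: l) = D.simpleReflection c j * D.wordPerm c l := List.prod_cons

theorem wordPerm_cons_apply (j : Fin (D.n + 1)) (l : List (Fin (D.n + 1))) (x : V) :
    D.wordPerm c (j :: l) x = sAff c (D.aSimple j) (D.wordPerm c l x) := by
  rw [wordPerm_cons, Equiv.Perm.mul_apply, simpleReflection_apply]

theorem wordPerm_apply (l : List (Fin (D.n + 1))) (x : V) :
    D.wordPerm c l x = ((l.map fun j ↦ sAff c (D.aSimple j)).foldr (· ∘ ·) id) x := by
  induction l with
  | nil => rfl
  | cons j l ih => rw [wordPerm_cons_apply, ih]; rfl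

variable {c} {D}

theorem IsReducedWord.eq_wordPerm (h : D.IsReducedWord c w l) : w = D.wordPerm c l :=
  Equiv.ext fun x ↦ (h.2 x).trans (D.wordPerm_apply c l x).symm

end Words

section Inversions

variable {c}

theorem eq_of_isAffRoot_of_aval_eq (hc : c ≠ 0) (ha : D.IsAffRoot a) (hb : D.IsAffRoot b)
    (h : ∀ x, aval c a x = aval c b x) : a = b :=
  eq_of_aval_eq hc (D.ne_zero _ ha) (D.ne_zero _ hb) h

theorem isAffRoot_of_isAffNeg (hb : D.IsAffNeg b) : D.IsAffRoot b := by
  simpa only [IsAffRoot, neg_neg] using D.neg_mem_R0 hb.1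

theorem reflectRoot_reflectRoot (ha : D.IsAffRoot a) (hb : D.IsAffRoot b) :
    reflectRoot a (reflectRoot a b) = b := by
  have hab := D.isAffRoot_reflectRoot ha hb
  refine D.eq_of_isAffRoot_of_aval_eq one_ne_zero (D.isAffRoot_reflectRoot ha hab) hb fun x ↦ ?_
  rw [D.aval_reflectRoot 1 ha hab, D.aval_reflectRoot 1 ha hb, sAff_involutive (D.ne_zero _ ha)]

theorem RW_one (hc : c ≠ 0) : D.RW c 1 = ∅ := by
  refine Set.eq_empty_of_forall_notMem fun a ⟨ha, b, hb, hab⟩ ↦ ?_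
  obtain rfl := D.eq_of_isAffRoot_of_aval_eq hc ha.1 (D.isAffRoot_of_isAffNeg hb) hab
  exact D.not_isAffNeg_of_isAffPos ha hb

theorem subsingleton_mapsRoot (hc : c ≠ 0) (w : Equiv.Perm V) (b : V × ℤ) :
    {a | D.IsAffRoot a ∧ mapsRoot c w a b}.Subsingleton := fun a ⟨ha, hab⟩ a' ⟨ha', hab'⟩ ↦
  D.eq_of_isAffRoot_of_aval_eq hc ha ha' fun x ↦ by
    simpa only [Equiv.Perm.inv_def, Equiv.symm_apply_apply] using
      (hab (w x)).trans (hab' (w x)).symm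

theorem RW_simpleReflection_mul_subset (j : Fin (D.n + 1)) (w : Equiv.Perm V) :
    D.RW c (D.simpleReflection c j * w) ⊆
      D.RW c w ∪ {a | D.IsAffRoot a ∧ mapsRoot c w a (D.aSimple j)} := by
  rintro a ⟨ha, b, hb, hab⟩
  have hj := (D.isAffPos_aSimple j).1
  have hbR := D.isAffRoot_of_isAffNeg hb
  have maps : mapsRoot c w a (reflectRoot (D.aSimple j) b) := fun x ↦ by
    rw [D.aval_reflectRoot c hj hbR, ← hab, mul_inv_rev, simpleReflection_inv,
      Equiv.Perm.mul_apply, simpleReflection_apply, sAff_involutive (D.aSimple_fst_ne_zero j)]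
  rcases D.isAffPos_or_isAffNeg (D.isAffRoot_reflectRoot hj hbR) with hpos | hneg
  · refine .inr ⟨ha.1, ?_⟩
    by_cases h : reflectRoot (D.aSimple j) b = D.aSimple j
    · rwa [h] at maps
    · have := D.isAffPos_reflectRoot_aSimple j hpos h
      rw [D.reflectRoot_reflectRoot hj hbR] at this
      exact absurd hb (D.not_isAffNeg_of_isAffPos this)
  · exact .inl ⟨ha, _, hneg, maps⟩

theorem encard_RW_union_le (hc : c ≠ 0) (j : Fin (D.n + 1)) (w : Equiv.Perm V) :
    (D.RW c w ∪ {a | D.IsAffRoot a ∧ mapsRoot c w a (D.aSimple j)}).encard ≤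
      (D.RW c w).encard + 1 :=
  (Set.encard_union_le ..).trans (by
    gcongr
    exact Set.encard_le_one_iff_subsingleton.2 (D.subsingleton_mapsRoot hc w _))

theorem encard_RW_wordPerm_le (hc : c ≠ 0) (l : List (Fin (D.n + 1))) :
    (D.RW c (D.wordPerm c l)).encard ≤ l.length := by
  induction l with
  | nil => rw [wordPerm_nil, D.RW_one hc, Set.encard_empty]; exact zero_le
  | cons j l ih =>
    rw [wordPerm_cons, List.length_cons, Nat.cast_add, Nat.cast_one]
    exact (Set.encard_le_encard (D.RW_simpleReflection_mul_subset j _)).trans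
      ((D.encard_RW_union_le hc j _).trans (by gcongr))

theorem finite_RW_wordPerm (hc : c ≠ 0) (l : List (Fin (D.n + 1))) :
    (D.RW c (D.wordPerm c l)).Finite :=
  Set.finite_of_encard_le_coe (D.encard_RW_wordPerm_le hc l)

variable {D} in
theorem IsReducedWord.encard_RW (hc : c ≠ 0) (h : D.IsReducedWord c w l) :
    (D.RW c (D.wordPerm c l)).encard = l.length := by
  rw [h.1, len, h.eq_wordPerm, (D.finite_RW_wordPerm hc l).cast_ncard_eq]

theorem aval_nonpos_of_mem_RW (hb : b ∈ D.RW c w) (hx : w x ∈ D.alcove c) : aval c b x ≤ 0 := by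
  obtain ⟨-, b', hb', hbb'⟩ := hb
  have := hx _ hb'
  rwa [aval_neg, ← hbb', Equiv.Perm.inv_def, Equiv.symm_apply_apply, neg_nonneg] at this

variable (c) in
/-- Each letter `j` of the word, applied from right to left starting at `x`, reflects a point with
`a_j ≤ 0`, that is, moves it towards the fundamental alcove. -/
def IsDescent : List (Fin (D.n + 1)) → V → Prop
  | [], _ => True
  | j :: l, x => aval c (D.aSimple j) (D.wordPerm c l x) ≤ 0 ∧ IsDescent l x

theorem isDescent_of_encard_RW_eq (hc : c ≠ 0) (l : List (Fin (D.n + 1)))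
    (hcard : (D.RW c (D.wordPerm c l)).encard = l.length)
    (hx : ∀ b ∈ D.RW c (D.wordPerm c l), aval c b x ≤ 0) : D.IsDescent c l x := by
  induction l with
  | nil => trivial
  | cons j l ih =>
    have hfin := D.finite_RW_wordPerm hc (j :: l)
    rw [wordPerm_cons] at hcard hx hfin
    rw [List.length_cons, Nat.cast_add, Nat.cast_one] at hcard
    set w := D.wordPerm c l
    set S := {a | D.IsAffRoot a ∧ mapsRoot c w a (D.aSimple j)}
    have hle : (D.RW c w).encard ≤ l.length := D.encard_RW_wordPerm_le hc l
    have hunion : (D.RW c w ∪ S).encard ≤ (D.RW c w).encard + 1 := D.encard_RW_union_le hc j w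
    have heq : D.RW c (D.simpleReflection c j * w) = D.RW c w ∪ S :=
      hfin.eq_of_subset_of_encard_le (D.RW_simpleReflection_mul_subset j w)
        (hcard ▸ hunion.trans (by gcongr))
    rw [heq] at hcard hx
    have hw : (D.RW c w).encard = l.length :=
      hle.antisymm ((ENat.add_le_add_iff_right ENat.one_ne_top).1 (hcard ▸ hunion))
    obtain ⟨b, hb⟩ : S.Nonempty := by
      by_contra hempty
      rw [Set.not_nonempty_iff_eq_empty.1 hempty, Set.union_empty, hw] at hcard
      exact absurd hcard (by exact_mod_cast (Nat.lt_succ_self _).ne)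
    have last : aval c (D.aSimple j) (w x) = aval c b x := by
      rw [← hb.2, Equiv.Perm.inv_def, Equiv.symm_apply_apply]
    exact ⟨last ▸ hx b (.inr hb), ih hw fun a ha ↦ hx a (.inl ha)⟩

variable {D} in
theorem IsReducedWord.isDescent (hc : c ≠ 0) (h : D.IsReducedWord c w l)
    (hx : w x ∈ D.alcove c) : D.IsDescent c l x := by
  obtain rfl := h.eq_wordPerm
  exact D.isDescent_of_encard_RW_eq hc l (h.encard_RW hc) fun b hb ↦
    D.aval_nonpos_of_mem_RW hb hx

end Inversions

end RootSystemData

namespace RootSystemData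

variable {V : Type*} [NormedAddCommGroup V] [InnerProductSpace ℝ V] (D : RootSystemData V)
  {c : ℝ} {b : V × ℤ} {p u x y z : V}

section AlcoveInterior

variable (c) in
/-- The open fundamental alcove, on which all positive affine roots are strictly positive. -/
def alcoveInterior : Set V := {x | ∀ b : V × ℤ, D.IsAffPos b → 0 < aval c b x}

theorem alcoveInterior_nonempty (hc : 0 < c) : (D.alcoveInterior c).Nonempty := by
  obtain ⟨q, hq⟩ := D.exists_inner_pos
  have small : ∀ᶠ t : ℝ in nhdsWithin 0 (Set.Ioi 0), ∀ α ∈ D.R0, -c < t * ⟪q, coroot α⟫ := by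
    refine (Filter.eventually_all_finset _).2 fun α _ ↦ nhdsWithin_le_nhds ?_
    have cont : Continuous fun t : ℝ ↦ t * ⟪q, coroot α⟫ := by fun_prop
    exact cont.tendsto' 0 0 (zero_mul _) |>.eventually (lt_mem_nhds (neg_neg_of_pos hc))
  obtain ⟨t, ht, ht0⟩ := (small.and self_mem_nhdsWithin).exists
  refine ⟨t • q, fun b ⟨hb, hlevel⟩ ↦ ?_⟩
  rw [aval, real_inner_smul_left]
  rcases hlevel with h1 | ⟨h0, hpos⟩
  · have : (1 : ℝ) * c ≤ b.2 * c := by gcongr; exact_mod_cast h1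
    linarith [ht _ hb]
  · have : 0 < ⟪b.1, b.1⟫ := real_inner_self_pos.2 (D.ne_zero _ hb)
    rw [h0, inner_coroot, Int.cast_zero, zero_mul, add_zero]
    have := hq _ hpos
    replace ht0 : 0 < t := ht0
    positivity

end AlcoveInterior

section ReflectionOrder

variable (c)

/-- `y` is the mirror image of `x` in a reflection hyperplane, on the other side of it than `x` and
the fundamental alcove. -/
def ReflectionStep (x y : V) : Prop :=
  ∃ b : V × ℤ, D.IsAffPos b ∧ 0 < aval c b x ∧ y = sAff c b x

/-- The partial order on `V` generated by `ReflectionStep`; it replaces the order on orbits induced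
by the Bruhat order of the affine Weyl group. -/
def ReflectionLE : V → V → Prop := Relation.ReflTransGen (D.ReflectionStep c)

/-- Of the two points `y` and `s_j y`, the one separated from the fundamental alcove by the wall of
`a_j`. -/
def farther (j : Fin (D.n + 1)) (y : V) : V :=
  if 0 ≤ aval c (D.aSimple j) y then sAff c (D.aSimple j) y else y

variable {c}

variable {D} in
theorem ReflectionStep.dist_lt (h : D.ReflectionStep c x y) (hp : p ∈ D.alcoveInterior c) :
    dist x p < dist y p := by
  obtain ⟨b, hb, hx, rfl⟩ := h
  exact dist_lt_dist_sAff (D.ne_zero _ hb.1) hx (hp b hb)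

variable {D} in
theorem ReflectionLE.eq_or_dist_lt (h : D.ReflectionLE c x y) (hp : p ∈ D.alcoveInterior c) :
    x = y ∨ dist x p < dist y p := by
  induction h with
  | refl => exact .inl rfl
  | tail _ hstep ih =>
    refine .inr ?_
    rcases ih with rfl | hlt
    · exact hstep.dist_lt hp
    · exact hlt.trans (hstep.dist_lt hp)

theorem reflectionLE_sAff (hb : D.IsAffPos b) (hx : 0 ≤ aval c b x) :
    D.ReflectionLE c x (sAff c b x) := by
  rcases hx.eq_or_lt with h | h
  · rw [sAff, ← h, zero_smul, sub_zero]
    exact .refl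
  · exact .single ⟨b, hb, h, rfl⟩

theorem reflectionLE_farther (j : Fin (D.n + 1)) (y : V) :
    D.ReflectionLE c y (D.farther c j y) := by
  unfold farther
  split_ifs with h
  · exact D.reflectionLE_sAff (D.isAffPos_aSimple j) h
  · exact .refl

theorem sAff_reflectionLE_farther (j : Fin (D.n + 1)) (y : V) :
    D.ReflectionLE c (sAff c (D.aSimple j) y) (D.farther c j y) := by
  have hj := D.aSimple_fst_ne_zero j
  unfold farther
  split_ifs with h
  · exact .refl
  · have := D.reflectionLE_sAff (D.isAffPos_aSimple j) (x := sAff c (D.aSimple j) y) (c := c)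
      (by rw [aval_sAff hj]; linarith)
    rwa [sAff_involutive hj] at this

theorem farther_sAff_of_pos {j : Fin (D.n + 1)} (h : 0 < aval c (D.aSimple j) y) :
    D.farther c j (sAff c (D.aSimple j) y) = D.farther c j y := by
  rw [farther, farther, aval_sAff (D.aSimple_fst_ne_zero j), if_neg (by linarith), if_pos h.le]

variable {D} in
theorem ReflectionStep.sAff_aSimple (j : Fin (D.n + 1)) (hb : D.IsAffPos b) (hne : b ≠ D.aSimple j)
    (hx : 0 < aval c b x) :
    D.ReflectionStep c (sAff c (D.aSimple j) x) (sAff c (D.aSimple j) (sAff c b x)) := by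
  have hj := (D.isAffPos_aSimple j).1
  refine ⟨reflectRoot (D.aSimple j) b, D.isAffPos_reflectRoot_aSimple j hb hne, ?_, ?_⟩
  · rwa [D.aval_reflectRoot c hj hb.1, sAff_involutive (D.aSimple_fst_ne_zero j)]
  · exact (D.sAff_reflectRoot c hj hb.1 x).symm

variable {D} in
theorem ReflectionStep.farther_le (j : Fin (D.n + 1)) (h : D.ReflectionStep c x y) :
    D.ReflectionLE c (D.farther c j x) (D.farther c j y) := by
  obtain ⟨b, hb, hx, rfl⟩ := h
  by_cases hne : b = D.aSimple j
  · subst hne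
    rw [D.farther_sAff_of_pos hx]
    exact .refl
  rw [farther.eq_1 D c j x]
  split_ifs with h
  · exact .head (ReflectionStep.sAff_aSimple j hb hne hx) (D.sAff_reflectionLE_farther j _)
  · exact .head ⟨b, hb, hx, rfl⟩ (D.reflectionLE_farther j _)

variable {D} in
theorem ReflectionLE.farther_le (j : Fin (D.n + 1)) (h : D.ReflectionLE c x y) :
    D.ReflectionLE c (D.farther c j x) (D.farther c j y) := by
  induction h with
  | refl => exact .refl
  | tail _ hstep ih => exact ih.trans (hstep.farther_le j)

end ReflectionOrder

section LowerHull

variable (c) in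
/-- The convex hull of the points below `y` in the reflection order; it plays the role of
`Conv [y₊, y]`. -/
def lowerHull (y : V) : Set V := convexHull ℝ {z | D.ReflectionLE c z y}

theorem lowerHull_subset_insert_ball (hp : p ∈ D.alcoveInterior c) (y : V) :
    D.lowerHull c y ⊆ insert y (Metric.ball p (dist y p)) :=
  convexHull_min (fun _ hz ↦ ReflectionLE.eq_or_dist_lt hz hp) (convex_insert_ball_dist p y)

theorem mem_ball_of_mem_lowerHull (hp : p ∈ D.alcoveInterior c) (hz : z ∈ D.lowerHull c y)
    (hne : z ≠ y) : z ∈ Metric.ball p (dist y p) :=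
  (D.lowerHull_subset_insert_ball hp y hz).resolve_left hne

variable {j : Fin (D.n + 1)}

theorem lowerHull_mono (h : D.ReflectionLE c x y) : D.lowerHull c x ⊆ D.lowerHull c y :=
  convexHull_mono fun _ hz ↦ Relation.ReflTransGen.trans hz h

theorem farther_sAff_of_nonpos (hu : aval c (D.aSimple j) u ≤ 0) :
    D.farther c j (sAff c (D.aSimple j) u) = u := by
  rw [farther, aval_sAff (D.aSimple_fst_ne_zero j), if_pos (neg_nonneg.2 hu),
    sAff_involutive (D.aSimple_fst_ne_zero j)]

theorem sAff_mem_lowerHull (hu : aval c (D.aSimple j) u ≤ 0)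
    (hz : z ∈ D.lowerHull c (sAff c (D.aSimple j) u)) :
    sAff c (D.aSimple j) z ∈ D.lowerHull c u := by
  suffices h : D.lowerHull c (sAff c (D.aSimple j) u) ⊆
      sAff c (D.aSimple j) ⁻¹' D.lowerHull c u from h hz
  refine convexHull_min (fun v hv ↦ subset_convexHull ℝ _ ?_)
    (convex_preimage_sAff c _ (convex_convexHull ℝ _))
  have := ReflectionLE.farther_le j hv
  rw [D.farther_sAff_of_nonpos hu] at this
  exact (D.sAff_reflectionLE_farther j v).trans this

theorem sAff_reflectionLE (hu : aval c (D.aSimple j) u ≤ 0) :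
    D.ReflectionLE c (sAff c (D.aSimple j) u) u := by
  conv_rhs => rw [← D.farther_sAff_of_nonpos hu]
  exact D.reflectionLE_farther j _

theorem segment_subset_lowerHull (hu : aval c (D.aSimple j) u ≤ 0)
    (hz : z ∈ D.lowerHull c (sAff c (D.aSimple j) u)) :
    segment ℝ z (sAff c (D.aSimple j) z) ⊆ D.lowerHull c u :=
  (convex_convexHull ℝ _).segment_subset (D.lowerHull_mono (D.sAff_reflectionLE hu) hz)
    (D.sAff_mem_lowerHull hu hz)

theorem notMem_segment_of_mem_lowerHull (hp : p ∈ D.alcoveInterior c)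
    (hu : aval c (D.aSimple j) u ≤ 0) (hz : z ∈ D.lowerHull c (sAff c (D.aSimple j) u))
    (hne : z ≠ sAff c (D.aSimple j) u) : u ∉ segment ℝ z (sAff c (D.aSimple j) z) := by
  have hsz : sAff c (D.aSimple j) z ∈ Metric.ball p (dist u p) :=
    D.mem_ball_of_mem_lowerHull hp (D.sAff_mem_lowerHull hu hz) fun h ↦ hne
      (by rw [← h, sAff_involutive (D.aSimple_fst_ne_zero j)])
  have hz' : z ∈ Metric.ball p (dist u p) := by
    refine Metric.ball_subset_ball ?_ (D.mem_ball_of_mem_lowerHull hp hz hne)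
    rcases (D.sAff_reflectionLE hu).eq_or_dist_lt hp with h | h
    exacts [(congrArg (dist · p) h).le, h.le]
  exact fun h ↦ lt_irrefl _ (Metric.mem_ball.1 ((convex_ball p _).segment_subset hz' hsz h))

end LowerHull

end RootSystemData

namespace RootSystemData

variable {V : Type*} [NormedAddCommGroup V] [InnerProductSpace ℝ V] (D : RootSystemData V)
  {R : Type*} [Field R] {c : ℝ} {τ : V × ℤ → R} {l : List (Fin (D.n + 1))} {p x : V}

section WordOperators

theorem wordOp_cons (j : Fin (D.n + 1)) (l : List (Fin (D.n + 1))) (f : V → R) :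
    D.wordOp c τ (j :: l) f = Iop c τ (D.aSimple j) (D.wordOp c τ l f) := rfl

theorem isLinearMap_wordOp (c : ℝ) (τ : V × ℤ → R) (l : List (Fin (D.n + 1))) :
    IsLinearMap R (D.wordOp c τ l) := by
  induction l with
  | nil => exact ⟨fun _ _ ↦ rfl, fun _ _ ↦ rfl⟩
  | cons j l ih => exact ((isLinearMap_Iop c τ _).mk'.comp ih.mk').isLinear

theorem exists_wordOp_triangular (hτ : ∀ a, D.IsAffRoot a → τ a ≠ 0)
    (hp : p ∈ D.alcoveInterior c) (hl : D.IsDescent c l x) :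
    ∃ d : R, d ≠ 0 ∧ ∀ f : V → R, (∀ z ∈ Metric.ball p (dist x p), f z = 0) →
      (∀ z ∈ D.lowerHull c (D.wordPerm c l x), z ≠ D.wordPerm c l x → D.wordOp c τ l f z = 0) ∧
        D.wordOp c τ l f (D.wordPerm c l x) = d * f x := by
  induction l with
  | nil =>
    exact ⟨1, one_ne_zero, fun f hf ↦ ⟨fun z hz hne ↦ hf z (D.mem_ball_of_mem_lowerHull hp hz hne),
      (one_mul _).symm⟩⟩
  | cons j l ih =>
    obtain ⟨hu, hl⟩ := hl
    obtain ⟨d, hd, hdf⟩ := ih hl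
    simp only [D.wordPerm_cons_apply, D.wordOp_cons]
    set u := D.wordPerm c l x
    have hj := D.aSimple_fst_ne_zero j
    have hsu : sAff c (D.aSimple j) (sAff c (D.aSimple j) u) = u := sAff_involutive hj u
    set y := sAff c (D.aSimple j) u
    have coeff_ne_zero : Iop c τ (D.aSimple j) (Pi.single (sAff c (D.aSimple j) y) 1) y ≠ 0 :=
      Iop_single_sAff_ne_zero hj (hτ _ (D.isAffPos_aSimple j).1) y
    refine ⟨_, mul_ne_zero coeff_ne_zero hd, fun f hf ↦ ?_⟩
    obtain ⟨vanish, diag⟩ := hdf f hf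
    refine ⟨fun z hz hne ↦ Iop_eq_zero fun v hv ↦
      vanish v (D.segment_subset_lowerHull hu hz hv) fun h ↦
        D.notMem_segment_of_mem_lowerHull hp hu hz hne (h ▸ hv), ?_⟩
    rw [Iop_eq_mul fun v hv hne ↦ vanish v (D.segment_subset_lowerHull hu
      (subset_convexHull ℝ _ .refl) hv) (hsu ▸ hne), hsu, diag, mul_assoc]

end WordOperators

end RootSystemData

namespace RootSystemData

variable {V : Type*} [NormedAddCommGroup V] [InnerProductSpace ℝ V] (D : RootSystemData V)
  {R : Type*} [Field R] {c : ℝ} {τ : V × ℤ → R}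

section WeightLattice

theorem injective_inner_coroot : Function.Injective fun (x : V) (α : D.R0) ↦ ⟪x, coroot α.1⟫ := by
  intro x y h
  have on_roots : Set.EqOn (innerₗ V x) (innerₗ V y) D.R0 := fun α hα ↦ by
    have hαα : 2 / ⟪α, α⟫ ≠ 0 := div_ne_zero two_ne_zero (inner_self_ne_zero.2 (D.ne_zero α hα))
    have hxy : ⟪x, coroot α⟫ = ⟪y, coroot α⟫ := congrFun h ⟨α, hα⟩
    rw [inner_coroot, inner_coroot] at hxy
    exact mul_left_cancel₀ hαα hxy
  exact ext_inner_right ℝ fun v ↦ LinearMap.congr_fun (LinearMap.ext_on D.span_top on_roots) v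

theorem finite_weightLattice_inter_ball (p : V) (ρ : ℝ) :
    (D.weightLattice ∩ Metric.ball p ρ).Finite := by
  let bound (α : D.R0) : ℝ := (ρ + ‖p‖) * ‖coroot α.1‖
  have finite_box : {t : D.R0 → ℝ |
      ∀ α, t α ∈ ((↑) : ℤ → ℝ) '' Set.Icc ⌈-bound α⌉ ⌊bound α⌋}.Finite :=
    Set.Finite.pi' fun α ↦ (Set.finite_Icc ..).image _
  refine (finite_box.preimage D.injective_inner_coroot.injOn).subset fun x ⟨hxP, hx⟩ α ↦ ?_
  obtain ⟨k, hk⟩ := hxP α α.2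
  have norm_le : ‖x‖ ≤ ρ + ‖p‖ :=
    (norm_le_norm_sub_add x p).trans (by gcongr; exact (mem_ball_iff_norm.1 hx).le)
  have abs_le_bound : |⟪x, coroot α.1⟫| ≤ bound α :=
    (abs_real_inner_le_norm ..).trans (by simp only [bound]; gcongr)
  rw [hk, abs_le] at abs_le_bound
  exact ⟨k, ⟨Int.ceil_le.2 abs_le_bound.1, Int.le_floor.2 abs_le_bound.2⟩, hk.symm⟩

end WeightLattice

theorem tauw_ne_zero (hτ : ∀ a, D.IsAffRoot a → τ a ≠ 0) (w : Equiv.Perm V) :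
    D.tauw c τ w ≠ 0 :=
  finprod_mem_induction (· ≠ 0) one_ne_zero (fun _ _ ↦ mul_ne_zero) fun a ha ↦ hτ a ha.1.1

end RootSystemData

section Intertwiner

variable {V : Type*} [NormedAddCommGroup V] [InnerProductSpace ℝ V] (D : RootSystemData V)
  {R : Type*} [Field R] {c : ℝ} {τ : V × ℤ → R} {w : V → Equiv.Perm V}
  {Iw : Equiv.Perm V → (V → R) → V → R} {p : V}

namespace RootSystemData

/-- The extension by zero to `V` of a function on the weight lattice. -/
def extendByZero (f : D.weightLattice → R) (x : V) : R :=
  if h : x ∈ D.weightLattice then f ⟨x, h⟩ else 0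

theorem extendByZero_coe (f : D.weightLattice → R) (x : D.weightLattice) :
    D.extendByZero f x = f x := dif_pos x.2

theorem isLinearMap_extendByZero :
    IsLinearMap R (D.extendByZero : (D.weightLattice → R) → V → R) where
  map_add f g := funext fun x ↦ by
    simp only [extendByZero, Pi.add_apply]
    split_ifs <;> simp only [add_zero]
  map_smul r f := funext fun x ↦ by
    simp only [extendByZero, Pi.smul_apply]
    split_ifs <;> simp only [smul_zero]

variable (c τ w Iw) in
/-- The operator `𝒥` on functions `P → R`, for a field `R` of coefficients and an arbitrary choice
of elements `w x` moving `x` into the fundamental alcove; `JcalP` is the case `R = ℂ`. -/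
def intertwiner (f : D.weightLattice → R) (x : D.weightLattice) : R :=
  D.Jcal c τ w Iw (D.extendByZero f) x

theorem isLinearMap_intertwiner
    (hIw : ∀ x ∈ D.weightLattice, ∃ l : List (Fin (D.n + 1)), Iw (w x) = D.wordOp c τ l) :
    IsLinearMap R (D.intertwiner c τ w Iw) where
  map_add f g := funext fun x ↦ by
    obtain ⟨l, hl⟩ := hIw x x.2
    simp only [intertwiner, Jcal, Pi.add_apply, hl, D.isLinearMap_extendByZero.map_add,
      (D.isLinearMap_wordOp c τ l).map_add, mul_add]
  map_smul r f := funext fun x ↦ by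
    obtain ⟨l, hl⟩ := hIw x x.2
    simp only [intertwiner, Jcal, Pi.smul_apply, hl, D.isLinearMap_extendByZero.map_smul,
      (D.isLinearMap_wordOp c τ l).map_smul, smul_eq_mul, mul_left_comm]

theorem exists_intertwiner_triangular (hc : c ≠ 0) (hτ : ∀ a, D.IsAffRoot a → τ a ≠ 0)
    (hp : p ∈ D.alcoveInterior c) {l : List (Fin (D.n + 1))} {x : D.weightLattice}
    (hx : w x x ∈ D.alcove c) (hl : D.IsReducedWord c (w x) l)
    (hIw : Iw (w x) = D.wordOp c τ l) :
    ∃ d : R, d ≠ 0 ∧ ∀ f : D.weightLattice → R,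
      (∀ y : D.weightLattice, dist (y : V) p < dist (x : V) p → f y = 0) →
        D.intertwiner c τ w Iw f x = d * f x := by
  obtain ⟨d, hd, hdf⟩ := D.exists_wordOp_triangular hτ hp (hl.isDescent hc hx)
  refine ⟨_, mul_ne_zero (inv_ne_zero (D.tauw_ne_zero (c := c) hτ (w x))) hd, fun f hf ↦ ?_⟩
  have extension_vanishes : ∀ z ∈ Metric.ball p (dist (x : V) p), D.extendByZero f z = 0 := by
    intro z hz
    unfold extendByZero
    split_ifs with hzP
    exacts [hf ⟨z, hzP⟩ hz, rfl]
  have diag := (hdf _ extension_vanishes).2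
  rw [← hl.eq_wordPerm, extendByZero_coe] at diag
  rw [intertwiner, Jcal, hIw, diag, mul_assoc]

end RootSystemData

theorem statement6_general {cz : ℤ} (hc : 0 < cz) (hτ : ∀ a, D.IsAffRoot a → τ a ≠ 0)
    (hw : ∀ x ∈ D.weightLattice, w x x ∈ D.alcove cz)
    (hIw : ∀ x ∈ D.weightLattice, ∃ l : List (Fin (D.n + 1)),
      D.IsReducedWord cz (w x) l ∧ Iw (w x) = D.wordOp cz τ l) :
    IsLinearMap R (D.intertwiner cz τ w Iw) ∧ Function.Bijective (D.intertwiner cz τ w Iw) := by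
  have hc' : (0 : ℝ) < cz := Int.cast_pos.2 hc
  obtain ⟨p, hp⟩ := D.alcoveInterior_nonempty hc'
  have wf := wellFounded_dist_lt p (D.finite_weightLattice_inter_ball p)
  have lin : IsLinearMap R (D.intertwiner cz τ w Iw) :=
    D.isLinearMap_intertwiner fun x hx ↦ (hIw x hx).imp fun _ ↦ And.right
  have triangular (x : D.weightLattice) := (hIw x x.2).elim fun _ hl ↦
    D.exists_intertwiner_triangular hc'.ne' hτ hp (hw x x.2) hl.1 hl.2
  choose d hd hdf using triangular
  let T : (D.weightLattice → R) →+ (D.weightLattice → R) := lin.mk'.toAddMonoidHom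
  exact ⟨lin,
    injective_of_triangular wf T (fun x ↦ (d x * ·)) (fun x ↦ mul_right_injective₀ (hd x))
      fun f x ↦ hdf x f,
    surjective_of_triangular wf T (fun x ↦ (d x * ·)) (fun x ↦ mul_left_surjective₀ (hd x))
      fun f x ↦ hdf x f⟩

end Intertwiner

open RootSystemData in
/-- the intertwining operator `𝒥`, `(𝒥f)(λ) = τ_{w_λ}⁻¹ (I_{w_λ}f)(λ₊)`,
is a linear automorphism of the space of functions `P → ℂ`; in particular it is
bijective. -/
theorem statement6 {V : Type*} [NormedAddCommGroup V] [InnerProductSpace ℝ V]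
    (D : RootSystemData V) (cz : ℤ) (hc : 1 < cz)
    (τ : V × ℤ → ℂ) (hτ : D.IsMultiplicity (cz : ℝ) τ)
    (wmin : V → Equiv.Perm V) (hwmin : D.IsWmin (cz : ℝ) wmin)
    (Iw : Equiv.Perm V → (V → ℂ) → V → ℂ)
    (hIw : ∀ x : V, ∃ l : List (Fin (D.n + 1)),
      D.IsReducedWord (cz : ℝ) (wmin x) l ∧ Iw (wmin x) = D.wordOp (cz : ℝ) τ l) :
    IsLinearMap ℂ (JcalP D (cz : ℝ) τ wmin Iw) ∧
      Function.Bijective (JcalP D (cz : ℝ) τ wmin Iw) := by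
  exact statement6_general D (one_pos.trans hc) hτ.1 (fun x _ ↦ (hwmin x).2.1) fun x _ ↦ hIw x
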